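/- arXiv:2211.00766 — 2 statements merged into one kernel-verified Lean document; each statement's English description precedes it below -/
import Mathlib

section
/- For every finite coloring of the positive integers there exist positive integers x and y such that x, x + y, and x·y all receive the same color. -/
/-- A set of natural numbers is piecewise syndetic if for some `g` there are arbitrarily long
intervals on which its gaps are bounded by `g`. -/
def PiecewiseSyndetic (A : Set ℕ) : Prop :=
  ∃ g, ∀ N, ∃ a, ∀ n ≤ N, ∃ k ≤ g, a + n + k ∈ A

namespace PiecewiseSyndetic

variable {A B : Set ℕ}

theorem nonempty (hA : PiecewiseSyndetic A) : A.Nonempty := by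
  obtain ⟨g, hg⟩ := hA
  obtain ⟨a, ha⟩ := hg 0
  obtain ⟨k, -, hk⟩ := ha 0 le_rfl
  exact ⟨_, hk⟩

theorem mono (hA : PiecewiseSyndetic A) (h : A ⊆ B) : PiecewiseSyndetic B := by
  obtain ⟨g, hg⟩ := hA
  refine ⟨g, fun N ↦ (hg N).imp fun a ha n hn ↦ ?_⟩
  obtain ⟨k, hk, hmem⟩ := ha n hn
  exact ⟨k, hk, h hmem⟩

theorem of_union (h : PiecewiseSyndetic (A ∪ B)) :
    PiecewiseSyndetic A ∨ PiecewiseSyndetic B := by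
  obtain ⟨g, hg⟩ := h
  refine or_iff_not_imp_left.2 fun hA ↦ ⟨g, fun N ↦ ?_⟩
  simp only [PiecewiseSyndetic, not_exists, not_forall] at hA
  obtain ⟨N', hN'⟩ := hA (N + g)
  obtain ⟨a, ha⟩ := hg (N' + N)
  obtain ⟨n, hn, hgap⟩ := hN' a
  refine ⟨a + n, fun m hm ↦ ?_⟩
  obtain ⟨k, hk, hmem⟩ := ha (n + m) (by omega)
  refine ⟨k, hk, ?_⟩
  rw [← add_assoc a n m] at hmem
  refine hmem.resolve_left fun hmemA ↦ hgap (m + k) ⟨by omega, ?_⟩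
  rwa [← add_assoc]

theorem exists_of_biUnion {ι : Type*} (s : Finset ι) (f : ι → Set ℕ)
    (h : PiecewiseSyndetic (⋃ i ∈ s, f i)) : ∃ i ∈ s, PiecewiseSyndetic (f i) := by
  classical
  induction s using Finset.induction_on with
  | empty => simpa using h.nonempty
  | insert i s _ ih =>
    rw [Finset.set_biUnion_insert] at h
    rcases h.of_union with h | h
    · exact ⟨i, Finset.mem_insert_self i s, h⟩
    · obtain ⟨j, hj, hfj⟩ := ih h
      exact ⟨j, Finset.mem_insert_of_mem hj, hfj⟩

theorem image_mul (hA : PiecewiseSyndetic A) {y : ℕ} (hy : 0 < y) :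
    PiecewiseSyndetic ((y * ·) '' A) := by
  obtain ⟨g, hg⟩ := hA
  refine ⟨y + y * g, fun N ↦ ?_⟩
  obtain ⟨a, ha⟩ := hg (N + 1)
  refine ⟨y * a, fun n hn ↦ ?_⟩
  have hdiv : n / y ≤ n := Nat.div_le_self n y
  obtain ⟨k, hk, hmem⟩ := ha (n / y + 1) (by omega)
  have hmod := Nat.mod_lt n hy
  have hk' : y * k ≤ y * g := Nat.mul_le_mul_left y hk
  refine ⟨y - n % y + y * k, by omega, _, hmem, ?_⟩
  have hn' := Nat.div_add_mod n y
  simp only [mul_add, mul_one]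
  omega

end PiecewiseSyndetic

theorem piecewiseSyndetic_setOf_pos : PiecewiseSyndetic {n | 0 < n} :=
  ⟨0, fun _ ↦ ⟨1, fun _ _ ↦ ⟨0, le_rfl, by simp only [Set.mem_ofPred_eq]; omega⟩⟩⟩

/-- The finitary **van der Waerden theorem**. -/
theorem exists_mono_arithmetic_progression_le (m : ℕ) (κ : Type*) [Finite κ] :
    ∃ W, ∀ C : ℕ → κ, ∃ b d, 0 < d ∧ d ≤ W ∧ b + m * d ≤ W ∧
      ∀ c ≤ m, C (b + c * d) = C b := by
  classical
  obtain ⟨ι, _, hι⟩ := Combinatorics.Line.exists_mono_in_high_dimension (Fin (m + 1)) κ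
  refine ⟨Fintype.card ι * (m + 1), fun C ↦ ?_⟩
  obtain ⟨l, color, hl⟩ := hι fun v ↦ C (∑ i, (v i : ℕ))
  set d := (Finset.univ.filter fun i ↦ l.idxFun i = none).card with hd
  have hline (x : Fin (m + 1)) : ∑ i, (l x i : ℕ) = ∑ i, (l 0 i : ℕ) + x * d := by
    rw [hd, Finset.card_filter, Finset.mul_sum, ← Finset.sum_add_distrib]
    refine Finset.sum_congr rfl fun i _ ↦ ?_
    cases h : l.idxFun i <;> simp [h]
  have hd_card : d ≤ Fintype.card ι := Finset.card_le_univ _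
  have hsum (x : Fin (m + 1)) : ∑ i, (l x i : ℕ) ≤ Fintype.card ι * (m + 1) := by
    simpa using Finset.sum_le_card_nsmul Finset.univ (fun i ↦ (l x i : ℕ)) (m + 1)
      fun i _ ↦ (l x i).isLt.le
  refine ⟨∑ i, (l 0 i : ℕ), d, ?_, by nlinarith, ?_, fun c hc ↦ ?_⟩
  · obtain ⟨i, hi⟩ := l.proper
    exact Finset.card_pos.2 ⟨i, by simpa using hi⟩
  · simpa only [hline (Fin.last m), Fin.val_last] using hsum (Fin.last m)
  · have h := (hl ⟨c, by omega⟩).trans (hl 0).symm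
    simpa only [hline ⟨c, _⟩] using h

/-- Some common difference is shared by a piecewise syndetic set of arithmetic progressions of a
given length inside a piecewise syndetic set. -/
theorem PiecewiseSyndetic.exists_arithmetic_progression {A : Set ℕ} (hA : PiecewiseSyndetic A)
    (m : ℕ) : ∃ d, 0 < d ∧ PiecewiseSyndetic {b | ∀ c ≤ m, b + c * d ∈ A} := by
  obtain ⟨g, hg⟩ := hA
  obtain ⟨W, hW⟩ := exists_mono_arithmetic_progression_le m (Fin (g + 1))
  suffices h : PiecewiseSyndetic (⋃ d ∈ Finset.Icc 1 W, {b | ∀ c ≤ m, b + c * d ∈ A}) by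
    obtain ⟨d, hd, hmem⟩ := exists_of_biUnion _ _ h
    exact ⟨d, (Finset.mem_Icc.1 hd).1, hmem⟩
  refine ⟨W + g, fun N ↦ ?_⟩
  obtain ⟨a, ha⟩ := hg (N + W)
  refine ⟨a, fun n hn ↦ ?_⟩
  have hC (j : ℕ) : ∃ k : Fin (g + 1), j ≤ W → a + (n + j) + k ∈ A := by
    by_cases hj : j ≤ W
    · obtain ⟨k, hk, hmem⟩ := ha (n + j) (by omega)
      exact ⟨⟨k, by omega⟩, fun _ ↦ hmem⟩
    · exact ⟨0, fun h ↦ absurd h hj⟩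
  choose C hC using hC
  obtain ⟨b, d, hd, hdW, hbd, hmono⟩ := hW C
  refine ⟨b + C b, by have := (C b).isLt; omega, ?_⟩
  simp only [Set.mem_iUnion, Finset.mem_Icc]
  refine ⟨d, ⟨hd, hdW⟩, fun c hc ↦ ?_⟩
  have hcd : c * d ≤ m * d := Nat.mul_le_mul_right d hc
  have h := hC (b + c * d) (by omega)
  rw [hmono c hc] at h
  convert h using 1
  ring

/-- If no `x`, `x + y`, `x * y` are monochromatic, then for each `m` there are `m` colors
each of which has a dilate containing one common piecewise syndetic set. -/
theorem exists_piecewiseSyndetic_subset_dilates {κ : Type*} [Fintype κ] (χ : ℕ → κ)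
    (hχ : ∀ x y : ℕ, 0 < x → 0 < y → χ (x + y) = χ x → χ (x * y) ≠ χ x) (m : ℕ) :
    ∃ (T : Finset κ) (p : κ → ℕ) (B : Set ℕ), T.card = m ∧ PiecewiseSyndetic B ∧
      (∀ b ∈ B, 0 < b) ∧ (∀ t, 0 < p t) ∧ ∀ t ∈ T, ∀ b ∈ B, ∃ x, b = p t * x ∧ χ x = t := by
  classical
  induction m with
  | zero =>
    exact ⟨∅, fun _ ↦ 1, {n | 0 < n}, rfl, piecewiseSyndetic_setOf_pos, fun _ h ↦ h,
      fun _ ↦ one_pos, by simp⟩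
  | succ m ih =>
    obtain ⟨T, p, B, hT, hB, hpos, hp, hBT⟩ := ih
    obtain ⟨y, hy, hD⟩ := hB.exists_arithmetic_progression (T.sup fun t ↦ p t ^ 2)
    set D : Set ℕ := {b | ∀ c ≤ T.sup fun t ↦ p t ^ 2, b + c * y ∈ B}
    have hDB : D ⊆ B := fun b hb ↦ by simpa using hb 0 (Nat.zero_le _)
    obtain ⟨t, -, ht⟩ := PiecewiseSyndetic.exists_of_biUnion Finset.univ
      (fun t ↦ (y * ·) '' D ∩ χ ⁻¹' {t})
      ((hD.image_mul hy).mono fun b hb ↦ by simpa using hb)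
    have htT : t ∉ T := by
      intro htT
      obtain ⟨_, ⟨b, hbD, rfl⟩, hbt⟩ := ht.nonempty
      obtain ⟨x, rfl, hx⟩ := hBT t htT b (hDB hbD)
      obtain ⟨z, hz, hzt⟩ := hBT t htT _
        (hbD (p t ^ 2) (Finset.le_sup (f := fun t ↦ p t ^ 2) htT))
      have hxz : z = x + p t * y := Nat.eq_of_mul_eq_mul_left (hp t) (by rw [← hz]; ring)
      have hx0 : 0 < x := Nat.pos_of_mul_pos_left (hpos _ (hDB hbD))
      refine hχ x (p t * y) hx0 (Nat.mul_pos (hp t) hy) (by rw [← hxz, hzt, hx]) ?_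
      have hprod : x * (p t * y) = y * (p t * x) := by ring
      rw [hprod, hx]
      exact hbt
    refine ⟨insert t T, fun s ↦ if s = t then 1 else y * p s, _,
      by rw [Finset.card_insert_of_notMem htT, hT], ht, ?_, fun s ↦ ?_, ?_⟩
    · rintro _ ⟨⟨b, hb, rfl⟩, -⟩
      exact Nat.mul_pos hy (hpos b (hDB hb))
    · have := Nat.mul_pos hy (hp s)
      dsimp only
      split_ifs <;> omega
    · rintro s hs _ ⟨⟨b, hb, rfl⟩, hbt⟩
      by_cases hst : s = t
      · exact ⟨y * b, by simp [hst], hst ▸ hbt⟩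
      · obtain ⟨x, rfl, hx⟩ := hBT s (Finset.mem_of_mem_insert_of_ne hs hst) b (hDB hb)
        exact ⟨x, by simp [hst, mul_assoc], hx⟩

theorem stmt2 (n : ℕ) (χ : ℕ → Fin n) :
    ∃ x y : ℕ, 0 < x ∧ 0 < y ∧ χ (x + y) = χ x ∧ χ (x * y) = χ x := by
  by_contra! hχ
  obtain ⟨T, -, -, hT, -⟩ := exists_piecewiseSyndetic_subset_dilates χ hχ (n + 1)
  have := T.card_le_univ
  rw [Fintype.card_fin] at this
  omega
end

section
/- For every finite coloring χ of T and all positive integers n and s, there exist x, c_1, …, c_n ∈ T such that: (i) for every 0 ≤ i ≤ n, χ((c_1·c_2⋯c_i)·x) = χ(x) (with the empty product omitted when i = 0); and (ii) for every 0 ≤ i < n and every nonzero good polynomial P in n − i variables of size at most s, χ((c_1·c_2⋯c_i)·x + P(c_{i+1}, c_{i+2}, …, c_n)) = χ(x). -/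
/-- `InT p` means `p` is a nonzero good polynomial in one variable, i.e. an element
of the semiring `T`: nonzero, with nonnegative integer coefficients (automatic over `ℕ`)
and zero constant term. -/
def InT (p : Polynomial ℕ) : Prop := p ≠ 0 ∧ p.coeff 0 = 0

/-- A nonzero good multivariate polynomial of size at most `c`: nonzero, zero constant
term, total degree at most `c`, and all coefficients at most `c`. -/
def GoodOfSize {σ : Type*} (c : ℕ) (P : MvPolynomial σ ℕ) : Prop :=
  P ≠ 0 ∧ MvPolynomial.coeff 0 P = 0 ∧ P.totalDegree ≤ c ∧ ∀ d, MvPolynomial.coeff d P ≤ c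

open Polynomial in
/-- The number of leading coefficients that occur in `A`, degree by degree. -/
noncomputable def petWeight {R : Type} [CommRing R] (A : Finset R[X]) : ℕ →₀ ℕ := by
  classical
  exact Finsupp.onFinset (A.image natDegree)
    (fun e => ((A.filter fun p => p.natDegree = e).image leadingCoeff).card) (by
      intro e he
      obtain ⟨c, hc⟩ := Finset.card_pos.1 (Nat.pos_of_ne_zero he)
      obtain ⟨p, hp, -⟩ := Finset.mem_image.1 hc
      exact Finset.mem_image.2 ⟨p, Finset.mem_filter.1 hp⟩)

theorem Finsupp.lex_gt_of_le_of_lt {f g : ℕ →₀ ℕ} (e : ℕ) (he : f e < g e)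
    (hle : ∀ e' > e, f e' ≤ g e') : Finsupp.Lex (· > ·) (· < ·) f g := by
  have hne : (g.support.filter fun j => f j < g j).Nonempty :=
    ⟨e, by simp only [Finset.mem_filter, Finsupp.mem_support_iff]; omega⟩
  obtain ⟨hj, hmax⟩ := (Finset.isGreatest_max' _ hne)
  set j := Finset.max' _ hne
  refine ⟨j, fun d hd => ?_, (Finset.mem_filter.1 hj).2⟩
  have hej : e ≤ j := hmax (Finset.mem_coe.2 (Finset.mem_filter.2
    ⟨Finsupp.mem_support_iff.2 (by omega), he⟩))
  have hd' : j < d := hd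
  by_contra hfg
  have hlt : f d < g d := lt_of_le_of_ne (hle d (by omega)) hfg
  have hdj : d ≤ j := hmax (Finset.mem_coe.2 (Finset.mem_filter.2
    ⟨Finsupp.mem_support_iff.2 (by omega), hlt⟩))
  omega

theorem wellFounded_petWeight_lex :
    WellFounded (Finsupp.Lex (· > ·) (· < ·) : (ℕ →₀ ℕ) → (ℕ →₀ ℕ) → Prop) :=
  Finsupp.Lex.wellFounded' (fun _ => Nat.not_lt_zero _) wellFounded_lt wellFounded_lt

section PolynomialVanDerWaerden

open Polynomial

variable {R : Type} [CommRing R]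

/-- The shifted difference of `p` and `p₁` by which the focus moves in colour focusing. -/
noncomputable def shiftDiff (p₁ p : R[X]) (d : R) : R[X] :=
  taylor d p - C (p.eval d) - p₁

theorem eval_shiftDiff (p₁ p : R[X]) (d x : R) :
    (shiftDiff p₁ p d).eval x = p.eval (x + d) - p.eval d - p₁.eval x := by
  simp [shiftDiff, taylor_eval]

theorem coeff_shiftDiff (p₁ p : R[X]) (d : R) {e : ℕ} (he : e ≠ 0) :
    (shiftDiff p₁ p d).coeff e = (taylor d p).coeff e - p₁.coeff e := by
  simp [shiftDiff, coeff_C, he]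

theorem natDegree_shiftDiff_le {p₁ p : R[X]} (d : R) (hp : p₁.natDegree ≤ p.natDegree) :
    (shiftDiff p₁ p d).natDegree ≤ p.natDegree := by
  refine (natDegree_sub_le_of_le (natDegree_sub_le_of_le (natDegree_taylor p d).le ?_) hp).trans
    (by simp : max (max p.natDegree 0) p.natDegree ≤ _)
  simp

/-- A shifted difference of degree at least that of `p₁` keeps the degree of `p`, and its leading
coefficient is controlled. -/
theorem leadingCoeff_shiftDiff {p₁ p : R[X]} {d : R} (h₁ : p₁.natDegree ≠ 0) (hp0 : p ≠ 0)
    (hp : p₁.natDegree ≤ p.natDegree) (hq : p₁.natDegree ≤ (shiftDiff p₁ p d).natDegree) :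
    (shiftDiff p₁ p d).natDegree = p.natDegree ∧
      (shiftDiff p₁ p d).leadingCoeff = p.leadingCoeff - p₁.coeff p.natDegree := by
  have hcoeff := coeff_shiftDiff p₁ p d (e := p.natDegree) (by omega)
  rw [coeff_taylor_natDegree] at hcoeff
  have hdeg : (shiftDiff p₁ p d).natDegree = p.natDegree := by
    refine le_antisymm (natDegree_shiftDiff_le d hp) ?_
    rcases hp.eq_or_lt with h | h
    · omega
    · apply le_natDegree_of_ne_zero
      rw [hcoeff, coeff_eq_zero_of_natDegree_lt h, sub_zero]
      exact leadingCoeff_ne_zero.2 hp0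
  exact ⟨hdeg, by rw [leadingCoeff, hdeg, hcoeff]⟩

open Classical in
theorem petWeight_apply (A : Finset R[X]) (e : ℕ) : petWeight A e =
    ((A.filter fun p => p.natDegree = e).image leadingCoeff).card := by
  simp only [petWeight, Finsupp.onFinset_apply]

/-- Polynomial exhaustion: passing to shifted differences with respect to a polynomial of
minimal degree lowers the weight. -/
theorem petWeight_lt {A B : Finset R[X]} {p₁ : R[X]} (hp₁ : p₁ ∈ A) (h₁ : p₁.natDegree ≠ 0)
    (hA : 0 ∉ A) (hmin : ∀ p ∈ A, p₁.natDegree ≤ p.natDegree) (hB0 : 0 ∉ B)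
    (hB : ∀ q ∈ B, ∃ p ∈ A, ∃ d, q = shiftDiff p₁ p d) :
    Finsupp.Lex (· > ·) (· < ·) (petWeight B) (petWeight A) := by
  classical
  refine Finsupp.lex_gt_of_le_of_lt p₁.natDegree ?_ fun e he => ?_
  · rw [petWeight_apply, petWeight_apply]
    set L := (A.filter fun p => p.natDegree = p₁.natDegree).image leadingCoeff
    have hmem : p₁.leadingCoeff ∈ L :=
      Finset.mem_image_of_mem _ (Finset.mem_filter.2 ⟨hp₁, rfl⟩)
    have hsub : ((B.filter fun p => p.natDegree = p₁.natDegree).image leadingCoeff) ⊆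
        (L.erase p₁.leadingCoeff).image (· - p₁.leadingCoeff) := by
      intro c hc
      obtain ⟨q, hq, rfl⟩ := Finset.mem_image.1 hc
      obtain ⟨hqB, hqd⟩ := Finset.mem_filter.1 hq
      obtain ⟨p, hp, d, rfl⟩ := hB q hqB
      obtain ⟨hd, hl⟩ := leadingCoeff_shiftDiff h₁ (fun h => hA (h ▸ hp)) (hmin p hp) hqd.ge
      rw [← hd, hqd] at hl
      refine Finset.mem_image.2 ⟨p.leadingCoeff, Finset.mem_erase.2 ⟨fun h => ?_, ?_⟩, hl.symm⟩
      · rw [h, coeff_natDegree, sub_self] at hl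
        exact hB0 (leadingCoeff_eq_zero.1 hl ▸ hqB)
      · exact Finset.mem_image_of_mem _ (Finset.mem_filter.2 ⟨hp, hd ▸ hqd⟩)
    calc _ ≤ _ := Finset.card_le_card hsub
      _ ≤ _ := Finset.card_image_le
      _ < _ := Finset.card_erase_lt_of_mem hmem
  · rw [petWeight_apply, petWeight_apply]
    refine Finset.card_le_card fun c hc => ?_
    obtain ⟨q, hq, rfl⟩ := Finset.mem_image.1 hc
    obtain ⟨hqB, hqd⟩ := Finset.mem_filter.1 hq
    obtain ⟨p, hp, d, rfl⟩ := hB q hqB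
    obtain ⟨hd, hl⟩ := leadingCoeff_shiftDiff (d := d) h₁ (fun h => hA (h ▸ hp)) (hmin p hp)
      (by omega)
    rw [coeff_eq_zero_of_natDegree_lt (by omega), sub_zero] at hl
    rw [hl]
    exact Finset.mem_image_of_mem _ (Finset.mem_filter.2 ⟨hp, by omega⟩)

/-- The finite form of the polynomial van der Waerden property for the family `A`, with
differences in `S`. -/
def PolyVdW {R : Type} [CommSemiring R] (S : Set R) (A : Finset R[X]) : Prop :=
  ∀ (κ : Type) [Finite κ], ∃ V D : Finset R, (∀ d ∈ D, d ∈ S) ∧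
    ∀ χ : R → κ, ∃ a ∈ V, ∃ d ∈ D, ∀ p ∈ A, χ (a + p.eval d) = χ a

/-- Colour focusing: either a monochromatic configuration exists, or there are `k` colour-focused
ones. -/
theorem exists_focused {S : Set R} (hS : ∀ x ∈ S, ∀ y ∈ S, x + y ∈ S) {A : Finset R[X]}
    {p₁ : R[X]}
    (ih : ∀ D : Finset R, ∃ B : Finset R[X], PolyVdW S B ∧
      ∀ p ∈ A, ∀ d ∈ D, shiftDiff p₁ p d ≠ 0 → shiftDiff p₁ p d ∈ B)
    (h0 : ∀ p ∈ A, p.eval 0 = 0)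
    (κ : Type) [Finite κ] (k : ℕ) :
    ∃ V D : Finset R, (∀ d ∈ D, d ∈ S) ∧ ∀ χ : R → κ,
      (∃ a ∈ V, ∃ d ∈ D, ∀ p ∈ A, χ (a + p.eval d) = χ a) ∨
      ∃ a ∈ V, ∃ Γ : Finset κ, Γ.card = k ∧ χ a ∉ Γ ∧
        ∀ γ ∈ Γ, ∃ d ∈ D, ∀ p ∈ A, χ (a + p.eval d) = γ := by
  classical
  induction k with
  | zero => exact ⟨{0}, ∅, by simp, fun χ => Or.inr ⟨0, by simp, ∅, by simp⟩⟩
  | succ k hk =>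
    obtain ⟨V, D, hD, hVD⟩ := hk
    obtain ⟨B, hB, hAB⟩ := ih (insert 0 D)
    let W : Finset R := V ∪ (V ×ˢ A ×ˢ D).image fun w => w.1 + w.2.1.eval w.2.2
    obtain ⟨V', D', hD', hVD'⟩ := hB (W → κ)
    refine ⟨(V' ×ˢ V).image (fun w => w.1 + w.2) ∪
        (V' ×ˢ V ×ˢ D').image (fun w => w.1 + w.2.1 - p₁.eval w.2.2),
      D ∪ D' ∪ (D' ×ˢ D).image (fun w => w.1 + w.2), ?_, fun χ => ?_⟩
    · intro d hd
      simp only [Finset.mem_union, Finset.mem_image, Finset.mem_product, Prod.exists] at hd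
      rcases hd with (hd | hd) | ⟨x, y, ⟨hx, hy⟩, rfl⟩
      exacts [hD d hd, hD' d hd, hS x (hD' x hx) y (hD y hy)]
    obtain ⟨a', ha', d', hd', hmono⟩ := hVD' fun z u => χ (z + u)
    have hblock : ∀ p ∈ A, ∀ d ∈ insert 0 D, ∀ u ∈ W,
        χ (a' + (shiftDiff p₁ p d).eval d' + u) = χ (a' + u) := by
      intro p hp d hd u hu
      by_cases hz : shiftDiff p₁ p d = 0
      · simp [hz]
      · exact congrFun (hmono _ (hAB p hp d hd hz)) ⟨u, hu⟩
    rcases hVD fun z => χ (a' + z) with ⟨a, ha, d, hd, hw⟩ | ⟨a, ha, Γ, hΓ, haΓ, hfoc⟩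
    · refine Or.inl ⟨a' + a, ?_, d, ?_, fun p hp => ?_⟩
      · exact Finset.mem_union_left _ (Finset.mem_image.2 ⟨(a', a), by simp [ha, ha'], rfl⟩)
      · simp [hd]
      · rw [add_assoc]; exact hw p hp
    set a'' := a' + a - p₁.eval d' with ha''
    have hfoc' : ∀ γ ∈ insert (χ (a' + a)) Γ,
        ∃ d ∈ D ∪ D' ∪ (D' ×ˢ D).image (fun w => w.1 + w.2),
          ∀ p ∈ A, χ (a'' + p.eval d) = γ := by
      intro γ hγ
      rcases Finset.mem_insert.1 hγ with rfl | hγ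
      · refine ⟨d', by simp [hd'], fun p hp => ?_⟩
        rw [← hblock p hp 0 (by simp) a (by simp [W, ha]), eval_shiftDiff, h0 p hp]
        congr 1
        rw [ha'', add_zero]
        ring
      · obtain ⟨d, hd, hdγ⟩ := hfoc γ hγ
        refine ⟨d' + d, Finset.mem_union_right _ (Finset.mem_image.2 ⟨(d', d), by simp [hd, hd'],
          rfl⟩), fun p hp => ?_⟩
        rw [← hdγ p hp, ← hblock p hp d (by simp [hd]) (a + p.eval d)
          (Finset.mem_union_right _ (Finset.mem_image.2 ⟨(a, p, d), by simp [ha, hp, hd], rfl⟩)),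
          eval_shiftDiff]
        congr 1
        rw [ha'']
        ring
    have hmem : a'' ∈ (V' ×ˢ V).image (fun w => w.1 + w.2) ∪
        (V' ×ˢ V ×ˢ D').image (fun w => w.1 + w.2.1 - p₁.eval w.2.2) :=
      Finset.mem_union_right _ (Finset.mem_image.2 ⟨(a', a, d'), by simp [ha, ha', hd'], rfl⟩)
    by_cases hc : χ a'' ∈ insert (χ (a' + a)) Γ
    · exact Or.inl ⟨a'', hmem, hfoc' _ hc⟩
    · exact Or.inr ⟨a'', hmem, _, by rw [Finset.card_insert_of_notMem haΓ, hΓ], hc, hfoc'⟩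

/-- The polynomial van der Waerden theorem over a commutative ring, with differences in a
nonempty set closed under addition. -/
theorem polyVdW {S : Set R} (hS : ∀ x ∈ S, ∀ y ∈ S, x + y ∈ S) (hne : S.Nonempty)
    (A : Finset R[X]) (h0 : ∀ p ∈ A, p.eval 0 = 0) : PolyVdW S A := by
  classical
  have main : ∀ w : ℕ →₀ ℕ, ∀ A : Finset R[X], petWeight A = w → 0 ∉ A →
      (∀ p ∈ A, p.eval 0 = 0) → PolyVdW S A := by
    intro w
    induction w using wellFounded_petWeight_lex.induction with
    | _ w ih =>
    rintro A rfl hA h0 κ _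
    rcases A.eq_empty_or_nonempty with rfl | hAne
    · obtain ⟨s, hs⟩ := hne
      exact ⟨{0}, {s}, by simpa using hs, by simp⟩
    obtain ⟨p₁, hp₁, hmin⟩ := A.exists_min_image natDegree hAne
    have h₁ : p₁.natDegree ≠ 0 := by
      intro h
      rw [natDegree_eq_zero] at h
      obtain ⟨c, rfl⟩ := h
      have hc := h0 _ hp₁
      rw [eval_C] at hc
      exact hA (by simpa [hc] using hp₁)
    have _ := Fintype.ofFinite κ
    obtain ⟨V, D, hD, hVD⟩ := exists_focused hS (A := A) (p₁ := p₁) (fun D => by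
      let B := ((A ×ˢ D).image fun w => shiftDiff p₁ w.1 w.2).erase 0
      have hB : ∀ q ∈ B, ∃ p ∈ A, ∃ d, q = shiftDiff p₁ p d := by
        intro q hq
        obtain ⟨⟨p, d⟩, hpd, rfl⟩ := Finset.mem_image.1 (Finset.mem_of_mem_erase hq)
        exact ⟨p, (Finset.mem_product.1 hpd).1, d, rfl⟩
      have hB0 : 0 ∉ B := Finset.notMem_erase _ _
      refine ⟨B, ih _ (petWeight_lt hp₁ h₁ hA hmin hB0 hB) B rfl hB0 ?_, ?_⟩
      · intro q hq
        obtain ⟨p, hp, d, rfl⟩ := hB q hq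
        simp [eval_shiftDiff, h0 p₁ hp₁]
      · intro p hp d hd hne
        exact Finset.mem_erase.2 ⟨hne, Finset.mem_image.2 ⟨(p, d), by simp [hp, hd], rfl⟩⟩)
      h0 κ (Fintype.card κ)
    refine ⟨V, D, hD, fun χ => ?_⟩
    rcases hVD χ with h | ⟨a, -, Γ, hΓ, ha, -⟩
    · exact h
    · rw [(Finset.card_eq_iff_eq_univ Γ).1 hΓ] at ha
      exact absurd (Finset.mem_univ _) ha
  intro κ _
  obtain ⟨V, D, hD, hVD⟩ := main _ (A.erase 0) rfl (Finset.notMem_erase _ _)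
    (fun p hp => h0 p (Finset.mem_of_mem_erase hp)) κ
  refine ⟨V, D, hD, fun χ => ?_⟩
  obtain ⟨a, ha, d, hd, h⟩ := hVD χ
  refine ⟨a, ha, d, hd, fun p hp => ?_⟩
  by_cases hp0 : p = 0
  · simp [hp0]
  · exact h p (Finset.mem_erase.2 ⟨hp0, hp⟩)

end PolynomialVanDerWaerden

section NatPolynomial

open Polynomial

theorem exists_add_map_eq_map (V : Finset ℤ[X]) : ∃ v : ℕ[X], ∀ a ∈ V, ∃ b : ℕ[X],
    a + v.map (Nat.castRingHom ℤ) = b.map (Nat.castRingHom ℤ) := by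
  classical
  have single : ∀ a : ℤ[X], ∃ v b : ℕ[X],
      a + v.map (Nat.castRingHom ℤ) = b.map (Nat.castRingHom ℤ) := by
    intro a
    induction a using Polynomial.induction_on' with
    | add p q hp hq =>
      obtain ⟨v, b, h⟩ := hp
      obtain ⟨v', b', h'⟩ := hq
      exact ⟨v + v', b + b', by rw [Polynomial.map_add, Polynomial.map_add, ← h, ← h']; ring⟩
    | monomial n c =>
      refine ⟨monomial n (-c).toNat, monomial n c.toNat, ?_⟩
      rw [map_monomial, map_monomial, ← map_add]
      congr 1
      simp only [eq_natCast]
      omega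
  induction V using Finset.induction_on with
  | empty => exact ⟨0, by simp⟩
  | insert a V _ ih =>
    obtain ⟨v, hv⟩ := ih
    obtain ⟨u, b, hub⟩ := single a
    refine ⟨v + u, fun x hx => ?_⟩
    rcases Finset.mem_insert.1 hx with rfl | hx
    · exact ⟨b + v, by rw [Polynomial.map_add, Polynomial.map_add, ← hub]; ring⟩
    · obtain ⟨b', hb'⟩ := hv x hx
      exact ⟨b' + u, by rw [Polynomial.map_add, Polynomial.map_add, ← hb']; ring⟩

theorem natPolynomial_add_ne_zero {p : ℕ[X]} (hp : p ≠ 0) (q : ℕ[X]) : q + p ≠ 0 := by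
  intro h
  refine hp (Polynomial.ext fun n => ?_)
  have := congrArg (fun r => r.coeff n) h
  simp only [coeff_add, coeff_zero] at this ⊢
  omega

/-- The polynomial van der Waerden theorem over `ℕ[X]`, with nonzero differences. -/
theorem polyVdW_natPolynomial (A : Finset ℕ[X][X]) (h0 : ∀ p ∈ A, p.eval 0 = 0) :
    PolyVdW {d | d ≠ 0} A := by
  classical
  intro κ _
  set ι : ℕ[X] →+* ℤ[X] := mapRingHom (Nat.castRingHom ℤ)
  have hinj : Function.Injective ι := map_injective _ Nat.cast_injective
  obtain ⟨V, D, hD, hVD⟩ := polyVdW (S := ι '' {d | d ≠ 0})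
    (by
      rintro _ ⟨x, -, rfl⟩ _ ⟨y, hy, rfl⟩
      exact ⟨x + y, natPolynomial_add_ne_zero hy x, map_add _ _ _⟩)
    ⟨_, 1, one_ne_zero, rfl⟩ (A.image fun p => p.map ι)
    (by
      intro q hq
      obtain ⟨p, hp, rfl⟩ := Finset.mem_image.1 hq
      rw [← map_zero ι, eval_map_apply, h0 p hp]) κ
  obtain ⟨v, hv⟩ := exists_add_map_eq_map V
  refine ⟨V.image fun a => Function.invFun ι (a + ι v), D.image (Function.invFun ι), ?_,
    fun χ => ?_⟩
  · intro d hd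
    obtain ⟨_, hd', rfl⟩ := Finset.mem_image.1 hd
    obtain ⟨x, hx, rfl⟩ := hD _ hd'
    rwa [Function.leftInverse_invFun hinj]
  · obtain ⟨a, ha, d, hd, hmono⟩ := hVD fun z => χ (Function.invFun ι (z + ι v))
    obtain ⟨b, hb⟩ := hv a ha
    obtain ⟨x, hx, rfl⟩ := hD _ hd
    refine ⟨_, Finset.mem_image_of_mem _ ha, _, Finset.mem_image_of_mem _ hd, fun p hp => ?_⟩
    have := hmono _ (Finset.mem_image_of_mem _ hp)
    rw [← this, Function.leftInverse_invFun hinj, eval_map_apply, add_right_comm]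
    change a + ι v = ι b at hb
    rw [hb, ← map_add, Function.leftInverse_invFun hinj, Function.leftInverse_invFun hinj]

end NatPolynomial

section Chains

open Polynomial

/-- The sequence `y` with its first `i` entries replaced by `0`. -/
noncomputable def seqTail (i : ℕ) (y : ℕ → ℕ[X]) (j : ℕ) : ℕ[X] := if i ≤ j then y j else 0

theorem exists_aeval_seqTail_update (f : MvPolynomial ℕ ℕ) (i k : ℕ) (hik : i ≤ k)
    (y : ℕ → ℕ[X]) (hy : y k = 0) : ∃ g : ℕ[X][X], ∀ h : ℕ[X],
      MvPolynomial.aeval (seqTail i (Function.update y k h)) f =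
        MvPolynomial.aeval (seqTail i y) f + h * g.eval h := by
  let Φ : ℕ[X][X] :=
    MvPolynomial.aeval (fun j => if j = k then X else C (seqTail i y j)) f
  have hΦ : ∀ h, Φ.eval h = MvPolynomial.aeval (seqTail i (Function.update y k h)) f := by
    intro h
    change (evalRingHom h) (MvPolynomial.aeval _ f) = _
    rw [MvPolynomial.map_aeval, MvPolynomial.aeval_eq_eval₂Hom]
    refine MvPolynomial.eval₂Hom_congr (Subsingleton.elim _ _) (funext fun j => ?_) rfl
    by_cases hj : j = k
    · subst hj; simp [seqTail, hik]
    · simp [seqTail, hj]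
  have hy' : Function.update y k 0 = y := by rw [← hy, Function.update_eq_self]
  refine ⟨divX Φ, fun h => ?_⟩
  have h0 := hΦ 0
  rw [hy', ← coeff_zero_eq_eval_zero] at h0
  rw [← hΦ, ← h0]
  conv_lhs => rw [← divX_mul_X_add Φ]
  simp only [eval_add, eval_mul, eval_X, eval_C]
  ring

/-- A chain of `k` multipliers: the colour of each partial product with the starting element does
not change when the value of a polynomial in `F` at the later multipliers is added. The colouring
may depend on the partial product. -/
theorem exists_chain (F : Finset (MvPolynomial ℕ ℕ))
    (hF : ∀ f ∈ F, MvPolynomial.constantCoeff f = 0) (k : ℕ) (κ : Type) [Finite κ] :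
    ∃ K : Finset (ℕ[X] × (ℕ → ℕ[X])),
      (∀ w ∈ K, InT w.1 ∧ (∀ j < k, InT (w.2 j)) ∧ ∀ j ≥ k, w.2 j = 0) ∧
      ∀ χ : ℕ[X] → ℕ[X] → κ, ∃ w ∈ K, ∀ i ≤ k, ∀ f ∈ F,
        χ (∏ j ∈ Finset.range i, w.2 j)
            ((∏ j ∈ Finset.range i, w.2 j) * w.1 + MvPolynomial.aeval (seqTail i w.2) f) =
          χ (∏ j ∈ Finset.range i, w.2 j) ((∏ j ∈ Finset.range i, w.2 j) * w.1) := by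
  classical
  have tail_zero : ∀ (y : ℕ → ℕ[X]) (i : ℕ), (∀ j ≥ i, y j = 0) → ∀ f ∈ F,
      MvPolynomial.aeval (seqTail i y) f = 0 := by
    intro y i hy f hf
    have : seqTail i y = fun _ => 0 := by
      funext j
      unfold seqTail
      split_ifs with h
      exacts [hy j h, rfl]
    rw [this]
    have := MvPolynomial.aeval_zero' (R := ℕ) (S₁ := ℕ[X]) f
    rw [this, hF f hf, map_zero]
  induction k with
  | zero =>
    refine ⟨{(X, fun _ => 0)}, by simp [InT], fun χ => ⟨_, Finset.mem_singleton_self _, ?_⟩⟩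
    intro i _ f hf
    rw [tail_zero _ i (fun _ _ => rfl) f hf, add_zero]
  | succ k ih =>
    obtain ⟨K, hK, hKχ⟩ := ih
    let P : (ℕ → ℕ[X]) → ℕ → ℕ[X] := fun y i => ∏ j ∈ Finset.range i, y j
    have hPK : ∀ w ∈ K, P w.2 k ≠ 0 := fun w hw =>
      Finset.prod_ne_zero_iff.2 fun j hj => ((hK w hw).2.1 j (Finset.mem_range.1 hj)).1
    let U : ℕ[X] := ∏ w ∈ K, P w.2 k
    have hU : U ≠ 0 := Finset.prod_ne_zero_iff.2 hPK
    have hdvd : ∀ w ∈ K, ∀ i ≤ k, P w.2 i ∣ U := fun w hw i hi =>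
      (Finset.prod_dvd_prod_of_subset _ _ _ (Finset.range_subset_range.2 hi)).trans
        (Finset.dvd_prod_of_mem (fun w : ℕ[X] × (ℕ → ℕ[X]) => P w.2 k) hw)
    have hG : ∀ (w : ℕ[X] × (ℕ → ℕ[X])) (i : ℕ) (f : MvPolynomial ℕ ℕ), ∃ G : ℕ[X][X],
        G.eval 0 = 0 ∧ (w ∈ K → i ≤ k → ∀ d,
          MvPolynomial.aeval (seqTail i (Function.update w.2 k (X * U * d))) f =
            MvPolynomial.aeval (seqTail i w.2) f + P w.2 i * (X * G.eval d)) := by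
      intro w i f
      by_cases hw : w ∈ K
      · by_cases hi : i ≤ k
        · obtain ⟨g, hg⟩ := exists_aeval_seqTail_update f i k hi w.2 ((hK w hw).2.2 k le_rfl)
          obtain ⟨u, hu⟩ := hdvd w hw i hi
          refine ⟨X * C u * g.comp (C (X * U) * X), by simp, fun _ _ d => ?_⟩
          rw [hg]
          simp only [eval_mul, eval_X, eval_C, eval_comp]
          rw [hu]
          ring
        · exact ⟨0, by simp, fun _ h => absurd h hi⟩
      · exact ⟨0, by simp, fun h => absurd h hw⟩
    choose G hG0 hG using hG
    let I : Finset ((ℕ[X] × (ℕ → ℕ[X])) × ℕ × MvPolynomial ℕ ℕ) :=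
      K ×ˢ Finset.range (k + 1) ×ˢ F
    let Q : Finset (ℕ[X] × ℕ[X]) :=
      I.image fun q => (P q.1.2 q.2.1,
        P q.1.2 q.2.1 * q.1.1 + MvPolynomial.aeval (seqTail q.2.1 q.1.2) q.2.2)
    obtain ⟨V, D, hD, hVD⟩ := polyVdW_natPolynomial (I.image fun q => G q.1 q.2.1 q.2.2)
      (by
        intro p hp
        obtain ⟨q, -, rfl⟩ := Finset.mem_image.1 hp
        exact hG0 _ _ _) (Q → κ)
    refine ⟨(K ×ˢ V ×ˢ D).image fun q =>
      (X * q.2.1 + q.1.1, Function.update q.1.2 k (X * U * q.2.2)), ?_, fun χ => ?_⟩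
    · intro w' hw'
      obtain ⟨⟨w, z, d⟩, hq, rfl⟩ := Finset.mem_image.1 hw'
      simp only [Finset.mem_product] at hq
      obtain ⟨hw, hz, hd⟩ := hq
      obtain ⟨hx, hy, hy0⟩ := hK w hw
      refine ⟨⟨natPolynomial_add_ne_zero hx.1 _, by simp [hx.2]⟩, fun j hj => ?_, fun j hj => ?_⟩
      · rcases Nat.lt_succ_iff_lt_or_eq.1 hj with h | rfl
        · simpa [Function.update_of_ne h.ne] using hy j h
        · have hd0 : d ≠ 0 := hD d hd
          simp only [Function.update_self]
          exact ⟨mul_ne_zero (mul_ne_zero X_ne_zero hU) hd0, by simp [mul_assoc]⟩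
      · have : j ≠ k := by omega
        simpa [Function.update_of_ne this] using hy0 j (by omega)
    · obtain ⟨z, hz, d, hd, hmono⟩ := hVD fun z q => χ q.1.1 (q.1.1 * (X * z) + q.1.2)
      obtain ⟨w, hw, hχ⟩ := hKχ fun p q => χ p (p * (X * z) + q)
      refine ⟨_, Finset.mem_image_of_mem _
        (by simp [hw, hz, hd] : (w, z, d) ∈ K ×ˢ V ×ˢ D), fun i hi f hf => ?_⟩
      simp only
      rcases Nat.lt_succ_iff_lt_or_eq.1 (Nat.lt_succ_of_le hi) with hik | rfl
      · have hik : i ≤ k := by omega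
        have hprod : ∏ j ∈ Finset.range i, Function.update w.2 k (X * U * d) j = P w.2 i :=
          Finset.prod_congr rfl fun j hj => Function.update_of_ne
            (by have := Finset.mem_range.1 hj; omega) _ _
        have hI : (w, i, f) ∈ I := by
          simp only [I, Finset.mem_product, Finset.mem_range]
          exact ⟨hw, by omega, hf⟩
        have hcol := congrFun (hmono _ (Finset.mem_image_of_mem _ hI))
          ⟨_, Finset.mem_image_of_mem _ hI⟩
        have hstep := hχ i hik f hf
        simp only at hcol hstep
        rw [hprod, hG w i f hw hik d, mul_add]
        rw [← hstep, ← hcol]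
        congr 1
        ring
      · rw [tail_zero _ _ (fun j hj => ?_) f hf, add_zero]
        rw [Function.update_of_ne (by omega)]
        exact (hK w hw).2.2 j (by omega)

end Chains

theorem finite_setOf_goodOfSize (N s : ℕ) :
    {P : MvPolynomial (Fin N) ℕ | GoodOfSize s P}.Finite := by
  let Φ : MvPolynomial (Fin N) ℕ → (Fin N → Fin (s + 1)) → Fin (s + 1) := fun P e =>
    Fin.ofNat (s + 1) (P.coeff (Finsupp.equivFunOnFinite.symm fun v => (e v : ℕ)))
  refine Set.Finite.of_finite_image (f := Φ) (Set.toFinite _) ?_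
  rintro P ⟨-, -, hPd, hPc⟩ P' ⟨-, -, hPd', hPc'⟩ h
  ext d
  by_cases hd : d.degree ≤ s
  · have hcoord : ∀ v, d v < s + 1 := fun v =>
      Nat.lt_succ_of_le ((Finsupp.le_degree v d).trans hd)
    have := congrArg Fin.val (congrFun h fun v => ⟨d v, hcoord v⟩)
    have hd' : (Finsupp.equivFunOnFinite.symm fun v => d v) = d :=
      Finsupp.equivFunOnFinite.symm_apply_apply d
    simp only [Φ, hd', Fin.val_ofNat] at this
    rwa [Nat.mod_eq_of_lt (Nat.lt_succ_of_le (hPc d)),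
      Nat.mod_eq_of_lt (Nat.lt_succ_of_le (hPc' d))] at this
  · rw [MvPolynomial.coeff_eq_zero_of_totalDegree_lt, MvPolynomial.coeff_eq_zero_of_totalDegree_lt]
    · exact hPd'.trans_lt (not_le.1 hd)
    · exact hPd.trans_lt (not_le.1 hd)

section Blocks

open Polynomial

theorem inT_prod {J : Finset ℕ} (hJ : J.Nonempty) {y : ℕ → ℕ[X]} (hy : ∀ j ∈ J, InT (y j)) :
    InT (∏ j ∈ J, y j) := by
  refine ⟨Finset.prod_ne_zero_iff.2 fun j hj => (hy j hj).1, ?_⟩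
  obtain ⟨j, hj⟩ := hJ
  rw [coeff_zero_prod]
  exact Finset.prod_eq_zero hj (hy j hj).2

/-- The polynomial `P` with its `v`-th variable replaced by the product of the variables in the
interval from `σ (i + v)` to `σ (i + v + 1)`. -/
noncomputable def blockSubst {N : ℕ} (σ : ℕ → ℕ) (i : ℕ) (P : MvPolynomial (Fin N) ℕ) :
    MvPolynomial ℕ ℕ :=
  MvPolynomial.bind₁ (fun v : Fin N =>
    ∏ j ∈ Finset.Ico (σ (i + v)) (σ (i + v + 1)), MvPolynomial.X j) P

theorem constantCoeff_blockSubst {N : ℕ} {σ : ℕ → ℕ} {i : ℕ}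
    (hσ : ∀ v < N, σ (i + v) < σ (i + v + 1)) {P : MvPolynomial (Fin N) ℕ}
    (hP : MvPolynomial.coeff 0 P = 0) : MvPolynomial.constantCoeff (blockSubst σ i P) = 0 := by
  rw [← MvPolynomial.constantCoeff_eq] at hP
  have : ∀ Q : MvPolynomial (Fin N) ℕ,
      MvPolynomial.constantCoeff (blockSubst σ i Q) = MvPolynomial.constantCoeff Q := by
    intro Q
    have hcomp : MvPolynomial.constantCoeff.comp (MvPolynomial.bind₁ (fun v : Fin N =>
        ∏ j ∈ Finset.Ico (σ (i + v)) (σ (i + v + 1)),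
          (MvPolynomial.X j : MvPolynomial ℕ ℕ))).toRingHom = MvPolynomial.constantCoeff := by
      refine MvPolynomial.ringHom_ext (fun r => by simp) fun v => ?_
      have hlt := hσ v v.2
      simp [Nat.sub_eq_zero_iff_le, hlt]
    exact congrArg (fun φ => φ Q) hcomp
  rw [this, hP]

theorem aeval_seqTail_blockSubst {N : ℕ} {σ : ℕ → ℕ} {i : ℕ}
    (hσ : ∀ v < N, σ i ≤ σ (i + v)) (P : MvPolynomial (Fin N) ℕ) (y : ℕ → ℕ[X]) :
    MvPolynomial.aeval (seqTail (σ i) y) (blockSubst σ i P) =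
      MvPolynomial.aeval (fun v : Fin N =>
        ∏ j ∈ Finset.Ico (σ (i + v)) (σ (i + v + 1)), y j) P := by
  rw [blockSubst, MvPolynomial.aeval_bind₁]
  congr 2
  funext v
  rw [map_prod]
  refine Finset.prod_congr rfl fun j hj => ?_
  rw [MvPolynomial.aeval_X, seqTail, if_pos ((hσ v v.2).trans (Finset.mem_Ico.1 hj).1)]

theorem prod_blocks {σ : ℕ → ℕ} {n : ℕ} (hσ : ∀ l < n, σ l ≤ σ (l + 1)) (y : ℕ → ℕ[X]) {i : ℕ}
    (hi : i ≤ n) : (∏ l ∈ Finset.Icc 1 i, ∏ j ∈ Finset.Ico (σ (l - 1)) (σ l), y j) *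
      ∏ j ∈ Finset.range (σ 0), y j = ∏ j ∈ Finset.range (σ i), y j := by
  induction i with
  | zero => simp
  | succ i ih =>
    rw [Finset.prod_Icc_succ_top (by omega), mul_right_comm, ih (by omega), Nat.add_sub_cancel,
      Finset.prod_range_mul_prod_Ico _ (hσ i (by omega))]

end Blocks

/-- Among `m * n + 1` consecutive integers coloured with `m` colours, `n + 1` have the same
colour. -/
theorem exists_strictMono_mono_color {m n : ℕ} (φ : ℕ → Fin m) :
    ∃ σ : Fin (n + 1) → Fin (m * n + 1), StrictMono σ ∧ ∀ l, φ (σ l) = φ (σ 0) := by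
  obtain ⟨γ, -, hγ⟩ := Finset.exists_lt_card_fiber_of_mul_lt_card_of_maps_to
    (s := (Finset.univ : Finset (Fin (m * n + 1)))) (t := (Finset.univ : Finset (Fin m)))
    (f := fun i => φ i) (n := n) (by simp) (by simp)
  obtain ⟨J, hJ, hcard⟩ := Finset.exists_subset_card_eq (Nat.succ_le_of_lt hγ)
  have hφ : ∀ l, φ (J.orderEmbOfFin hcard l) = γ := fun l =>
    (Finset.mem_filter.1 (hJ (J.orderEmbOfFin_mem hcard l))).2
  exact ⟨J.orderEmbOfFin hcard, (J.orderEmbOfFin hcard).strictMono, fun l => by rw [hφ, hφ]⟩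

theorem stmt7 (m : ℕ) (χ : Polynomial ℕ → Fin m) (n s : ℕ) (hn : 0 < n) (hs : 0 < s) :
    ∃ x : Polynomial ℕ, InT x ∧
    ∃ c : ℕ → Polynomial ℕ, (∀ i, 1 ≤ i → i ≤ n → InT (c i)) ∧
      (∀ i ≤ n, χ ((∏ j ∈ Finset.Icc 1 i, c j) * x) = χ x) ∧
      (∀ i < n, ∀ P : MvPolynomial (Fin (n - i)) ℕ, GoodOfSize s P →
        χ ((∏ j ∈ Finset.Icc 1 i, c j) * x +
            MvPolynomial.aeval (fun v : Fin (n - i) => c (i + 1 + (v : ℕ))) P) = χ x) := by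
  let ext : (Fin (n + 1) → Fin (m * n + 1)) → ℕ → ℕ := fun σ l => σ (Fin.ofNat (n + 1) l)
  have hfin : (⋃ σ : Fin (n + 1) → Fin (m * n + 1), ⋃ i : Fin n,
      blockSubst (ext σ) i '' {P : MvPolynomial (Fin (n - i)) ℕ | GoodOfSize s P}).Finite :=
    Set.finite_iUnion fun σ => Set.finite_iUnion fun i => (finite_setOf_goodOfSize _ s).image _
  obtain ⟨K, hK, hKχ⟩ := exists_chain
    (hfin.toFinset.filter fun f => MvPolynomial.constantCoeff f = 0)
    (fun f hf => (Finset.mem_filter.1 hf).2) (m * n) (Fin m)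
  obtain ⟨⟨x, y⟩, hw, hχ⟩ := hKχ fun _ => χ
  obtain ⟨hx, hy, -⟩ := hK _ hw
  simp only at hx hy hχ
  obtain ⟨τ, hτ, hτχ⟩ := exists_strictMono_mono_color (n := n)
    fun i => χ ((∏ j ∈ Finset.range i, y j) * x)
  set σ := ext τ
  have hσ : ∀ l l', l < l' → l' ≤ n → σ l < σ l' := by
    intro l l' hl hl'
    refine hτ (Fin.lt_def.2 ?_)
    simpa [Fin.val_ofNat, Nat.mod_eq_of_lt (show l < n + 1 by omega),
      Nat.mod_eq_of_lt (show l' < n + 1 by omega)] using hl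
  have hσk : ∀ l, σ l ≤ m * n := fun l => Nat.le_of_lt_succ (τ _).2
  have hcolor : ∀ l, χ ((∏ j ∈ Finset.range (σ l), y j) * x) =
      χ ((∏ j ∈ Finset.range (σ 0), y j) * x) := fun l => hτχ (Fin.ofNat (n + 1) l)
  have hprod : ∀ i ≤ n, (∏ l ∈ Finset.Icc 1 i, ∏ j ∈ Finset.Ico (σ (l - 1)) (σ l), y j) *
      ((∏ j ∈ Finset.range (σ 0), y j) * x) = (∏ j ∈ Finset.range (σ i), y j) * x := by
    intro i hi
    rw [← mul_assoc, prod_blocks (fun l hl => (hσ l (l + 1) (by omega) (by omega)).le) y hi]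
  refine ⟨(∏ j ∈ Finset.range (σ 0), y j) * x, ⟨mul_ne_zero (Finset.prod_ne_zero_iff.2
      fun j hj => (hy j ((Finset.mem_range.1 hj).trans_le (hσk 0))).1) hx.1, ?_⟩,
    fun l => ∏ j ∈ Finset.Ico (σ (l - 1)) (σ l), y j, fun i h1 hi => ?_, fun i hi => ?_,
    fun i hi P hP => ?_⟩
  · rw [Polynomial.mul_coeff_zero, hx.2, mul_zero]
  · exact inT_prod (Finset.nonempty_Ico.2 (hσ _ _ (by omega) hi)) fun j hj =>
      hy j ((Finset.mem_Ico.1 hj).2.trans_le (hσk i))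
  · rw [hprod i hi, hcolor]
  · have hmem : blockSubst σ i P ∈ hfin.toFinset.filter
        fun f => MvPolynomial.constantCoeff f = 0 := by
      refine Finset.mem_filter.2 ⟨hfin.mem_toFinset.2 ?_, constantCoeff_blockSubst
        (fun v hv => hσ _ _ (by omega) (by omega)) hP.2.1⟩
      exact Set.mem_iUnion.2 ⟨τ, Set.mem_iUnion.2 ⟨⟨i, hi⟩, P, hP, rfl⟩⟩
    have hstep := hχ (σ i) (hσk i) _ hmem
    rw [aeval_seqTail_blockSubst (fun v hv => ?_)] at hstep
    · rw [hprod i hi.le, ← hcolor i, ← hstep]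
      congr 4
      funext v
      beta_reduce
      rw [show i + 1 + (v : ℕ) - 1 = i + v by omega, show i + 1 + (v : ℕ) = i + v + 1 by omega]
    · rcases Nat.eq_zero_or_pos v with rfl | hv0
      · rfl
      · exact (hσ _ _ (by omega) (by omega)).le
end
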